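/- Let (A,G,α) be a C*-dynamical system with G discrete, A unital with faithful tracial state τ, α τ-preserving, and τ' = τ∘E. If F : G → CB(A) is a completely positive Herz-Schur (A,G,α)-multiplier with τ∘F(e) ≤ τ and F(e)(1_A) = 1_A, then S_F is L²-bounded on (A⋊_{α,r}G, τ') and, under the identification L²(τ') ≅ ⊕_{t∈G} L²(A,τ), T_{S_F} = ⊕_{t∈G} T_{F(t)}; in particular T_{S_F} is a contraction. -/

import Mathlib

noncomputable section

open scoped ComplexOrder
open Matrix
open scoped ENNReal

/-- Positivity of a matrix over a (possibly non-unital) C*-algebra: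
`M` is positive iff it factors as `Nᴴ * N`. -/
def MatPos {R : Type*} [NonUnitalSemiring R] [StarRing R] {ν : Type*} [Fintype ν]
    (M : Matrix ν ν R) : Prop :=
  ∃ N : Matrix ν ν R, M = Nᴴ * N

/-- A linear map between C*-algebras is completely positive if all its matrix
amplifications preserve positivity. -/
def IsCompletelyPositive {R S : Type*} [NonUnitalSemiring R] [StarRing R] [Module ℂ R]
    [NonUnitalSemiring S] [StarRing S] [Module ℂ S] (Φ : R →ₗ[ℂ] S) : Prop :=
  ∀ (n : ℕ) (M : Matrix (Fin n) (Fin n) R), MatPos M → MatPos (M.map Φ)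

variable {H : Type*} [NormedAddCommGroup H] [InnerProductSpace ℂ H] [CompleteSpace H]

/-- The bounded operator on the Hilbert space `H ⊕₂ ⋯ ⊕₂ H` associated to an
operator-valued `n × n` matrix. -/
def matOp {ν : Type*} [Fintype ν] (M : Matrix ν ν (H →L[ℂ] H)) :
    PiLp 2 (fun _ : ν => H) →L[ℂ] PiLp 2 (fun _ : ν => H) :=
  ((PiLp.continuousLinearEquiv 2 ℂ (fun _ : ν => H)).symm :
      (∀ _ : ν, H) →L[ℂ] PiLp 2 (fun _ : ν => H)) ∘L
    (ContinuousLinearMap.pi fun i =>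
      (∑ j, (M i j) ∘L (ContinuousLinearMap.proj j)) ∘L
        ((PiLp.continuousLinearEquiv 2 ℂ (fun _ : ν => H)) :
          PiLp 2 (fun _ : ν => H) →L[ℂ] ∀ _ : ν, H))

variable {H : Type*} [NormedAddCommGroup H] [InnerProductSpace ℂ H] [CompleteSpace H]
variable {X : Type*}

/-- Evaluation at a point, as a continuous linear map `ℓ²(X,H) → H`. -/
def lpEval (x : X) : lp (fun _ : X => H) 2 →L[ℂ] H :=
  LinearMap.mkContinuous
    { toFun := fun f => f x
      map_add' := fun f g => by
        have := lp.coeFn_add f g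
        exact congrFun this x
      map_smul' := fun c f => by
        have := lp.coeFn_smul c f
        exact congrFun this x }
    1 (fun f => by
      simpa using lp.norm_apply_le_norm (by norm_num) f x)

/-- Inclusion of the `x`-th coordinate, as a continuous linear map `H → ℓ²(X,H)`. -/
def lpSingle (x : X) : H →L[ℂ] lp (fun _ : X => H) 2 := by
  classical
  exact LinearMap.mkContinuous
    { toFun := fun ξ => lp.single 2 x ξ
      map_add' := fun ξ η => by
        apply lp.ext
        funext j
        by_cases h : j = x
        · subst h; simp [lp.single_apply_self]
        · simp [lp.single_apply_ne _ _ _ h, lp.coeFn_add]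
      map_smul' := fun c ξ => by simp [lp.single_smul] }
    1 (fun ξ => by
      simpa using (lp.norm_single (p := 2) (by norm_num)
        (fun _ : X => ξ) x).le)

/-- The elementary operator `e_{x,y} ⊗ T` on `ℓ²(X,H)`. -/
def elemOp (x y : X) (T : H →L[ℂ] H) :
    lp (fun _ : X => H) 2 →L[ℂ] lp (fun _ : X => H) 2 :=
  (lpSingle x) ∘L T ∘L (lpEval y)

/-- The operator `T_k` on `ℓ²(X,H)` associated with a finitely supported kernel
`k : X × X → B(H)`; it is (defined to be) `0` if `k` is not finitely supported. -/
def TOp (k : X × X → (H →L[ℂ] H)) :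
    lp (fun _ : X => H) 2 →L[ℂ] lp (fun _ : X => H) 2 :=
  ∑ᶠ (p : X × X), elemOp p.1 p.2 (k p)

variable {G : Type*} [Group G]

/-- The left regular translation `λ_t` on `ℓ²(G,H)`. -/
def lam (t : G) : lp (fun _ : G => H) 2 →L[ℂ] lp (fun _ : G => H) 2 :=
  LinearMap.mkContinuous
    { toFun := fun f =>
        ⟨fun s => f (t⁻¹ * s), by
          apply memℓp_gen
          have hf : Summable fun s => ‖f s‖ ^ (2 : ℝ≥0∞).toReal :=
            (lp.memℓp f).summable (by norm_num)
          exact ((Equiv.mulLeft t⁻¹).summable_iff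
            (f := fun s => ‖f s‖ ^ (2 : ℝ≥0∞).toReal)).2 hf⟩
      map_add' := fun f g => by
        apply lp.ext; funext s
        exact congrFun (lp.coeFn_add f g) (t⁻¹ * s)
      map_smul' := fun c f => by
        apply lp.ext; funext s
        exact congrFun (lp.coeFn_smul c f) (t⁻¹ * s) }
    1 (fun f => by
      rw [one_mul]
      refine lp.norm_le_of_tsum_le (by norm_num) (norm_nonneg f) ?_
      have h1 : ∑' (s : G), ‖f (t⁻¹ * s)‖ ^ (2 : ℝ≥0∞).toReal
          = ∑' (s : G), ‖f s‖ ^ (2 : ℝ≥0∞).toReal :=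
        (Equiv.mulLeft t⁻¹).tsum_eq (fun s => ‖f s‖ ^ (2 : ℝ≥0∞).toReal)
      show ∑' (s : G), ‖f (t⁻¹ * s)‖ ^ (2 : ℝ≥0∞).toReal ≤ ‖f‖ ^ (2 : ℝ≥0∞).toReal
      rw [h1, ← lp.norm_rpow_eq_tsum (by norm_num) f])

/-- The diagonal ("block multiplication") operator on `ℓ²(X,H)` associated with a
uniformly bounded family of operators. -/
def diagOp (T : X → (H →L[ℂ] H)) (C : ℝ) (hC : ∀ x, ‖T x‖ ≤ C) :
    lp (fun _ : X => H) 2 →L[ℂ] lp (fun _ : X => H) 2 := by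
  have hC' : ∀ x, ‖T x‖ ≤ max C 0 := fun x => (hC x).trans (le_max_left _ _)
  have hr : (0:ℝ) < (2 : ℝ≥0∞).toReal := by norm_num
  have key : ∀ (f : lp (fun _ : X => H) 2) (x : X),
      ‖T x (f x)‖ ^ (2 : ℝ≥0∞).toReal
        ≤ (max C 0) ^ (2 : ℝ≥0∞).toReal * ‖f x‖ ^ (2 : ℝ≥0∞).toReal := by
    intro f x
    have h1 : ‖T x (f x)‖ ≤ max C 0 * ‖f x‖ :=
      ((T x).le_opNorm (f x)).trans
        (mul_le_mul_of_nonneg_right (hC' x) (norm_nonneg _))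
    calc ‖T x (f x)‖ ^ (2 : ℝ≥0∞).toReal
        ≤ (max C 0 * ‖f x‖) ^ (2 : ℝ≥0∞).toReal :=
          Real.rpow_le_rpow (norm_nonneg _) h1 hr.le
      _ = (max C 0) ^ (2 : ℝ≥0∞).toReal * ‖f x‖ ^ (2 : ℝ≥0∞).toReal :=
          Real.mul_rpow (le_max_right _ _) (norm_nonneg _)
  have mem : ∀ f : lp (fun _ : X => H) 2, Memℓp (fun x => T x (f x)) 2 := by
    intro f
    apply memℓp_gen
    exact Summable.of_nonneg_of_le
      (fun x => Real.rpow_nonneg (norm_nonneg _) _) (key f)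
      (((lp.memℓp f).summable hr).mul_left _)
  exact LinearMap.mkContinuous
    { toFun := fun f => ⟨fun x => T x (f x), mem f⟩
      map_add' := fun f g => by
        apply lp.ext; funext x
        have := congrFun (lp.coeFn_add f g) x
        show T x ((f + g) x) = _
        rw [this]
        exact map_add (T x) (f x) (g x)
      map_smul' := fun c f => by
        apply lp.ext; funext x
        have := congrFun (lp.coeFn_smul c f) x
        show T x ((c • f) x) = _
        rw [this]
        simp [lp.coeFn_smul] }
    (max C 0) (fun f => by
      refine lp.norm_le_of_tsum_le hr (by positivity) ?_
      show ∑' (x : X), ‖T x (f x)‖ ^ (2 : ℝ≥0∞).toReal ≤ _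
      calc ∑' (x : X), ‖T x (f x)‖ ^ (2 : ℝ≥0∞).toReal
          ≤ ∑' (x : X), (max C 0) ^ (2 : ℝ≥0∞).toReal * ‖f x‖ ^ (2 : ℝ≥0∞).toReal :=
            Summable.tsum_le_tsum (key f)
              (Summable.of_nonneg_of_le
                (fun x => Real.rpow_nonneg (norm_nonneg _) _) (key f)
                (((lp.memℓp f).summable hr).mul_left _))
              (((lp.memℓp f).summable hr).mul_left _)
        _ = (max C 0) ^ (2 : ℝ≥0∞).toReal * ∑' (x : X), ‖f x‖ ^ (2 : ℝ≥0∞).toReal :=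
            tsum_mul_left
        _ = (max C 0) ^ (2 : ℝ≥0∞).toReal * ‖f‖ ^ (2 : ℝ≥0∞).toReal := by
            rw [lp.norm_rpow_eq_tsum hr]
        _ = (max C 0 * ‖f‖) ^ (2 : ℝ≥0∞).toReal :=
            (Real.mul_rpow (by positivity) (norm_nonneg _)).symm)

section CB

variable {A' B' : Type*} [AddCommMonoid A'] [Module ℂ A'] [AddCommMonoid B'] [Module ℂ B']
variable {K : Type*} [NormedAddCommGroup K] [InnerProductSpace ℂ K] [CompleteSpace K]

/-- All matrix amplifications of `Φ` are bounded by `C`, where matrices over the abstract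
spaces are normed through the given embeddings into concrete operator algebras. -/
def CBBound (ιA : A' → (H →L[ℂ] H)) (ιB : B' → (K →L[ℂ] K))
    (Φ : A' →ₗ[ℂ] B') (C : ℝ) : Prop :=
  ∀ (n : ℕ) (M : Matrix (Fin n) (Fin n) A'),
    ‖matOp (M.map (fun a => ιB (Φ a)))‖ ≤ C * ‖matOp (M.map ιA)‖

/-- Complete boundedness of a linear map, relative to embeddings of its domain and
codomain into concrete operator algebras. -/
def IsCB (ιA : A' → (H →L[ℂ] H)) (ιB : B' → (K →L[ℂ] K)) (Φ : A' →ₗ[ℂ] B') : Prop :=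
  ∃ C : ℝ, 0 ≤ C ∧ CBBound ιA ιB Φ C

/-- The completely bounded norm of a linear map, relative to embeddings of its domain
and codomain into concrete operator algebras. -/
def cbNorm (ιA : A' → (H →L[ℂ] H)) (ιB : B' → (K →L[ℂ] K)) (Φ : A' →ₗ[ℂ] B') : ℝ :=
  sInf { C : ℝ | 0 ≤ C ∧ CBBound ιA ιB Φ C }

end CB

section Schur

variable {A : Type*} [NonUnitalCStarAlgebra A]

/-- A *-representation is non-degenerate if the span of the vectors in its range is dense. -/
def NondegenerateRep {K : Type*} [NormedAddCommGroup K] [InnerProductSpace ℂ K]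
    [CompleteSpace K] (ρ : A →⋆ₙₐ[ℂ] (K →L[ℂ] K)) : Prop :=
  Dense (Submodule.span ℂ {ξ : K | ∃ (a : A) (v : K), ρ a v = ξ} : Set K)

/-- A function `φ : X × X → CB(A, B(H))` is of positive type if it maps positive
matrices to positive matrices, entrywise. -/
def PositiveType (φ : X → X → (A →ₗ[ℂ] (H →L[ℂ] H))) : Prop :=
  ∀ (m : ℕ) (x : Fin m → X) (a : Matrix (Fin m) (Fin m) A),
    MatPos a → MatPos (Matrix.of fun p q => φ (x p) (x q) (a p q))

/-- A kernel `k : X × X → A` is positive definite if all the matrices obtained by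
sampling it at finitely many points are positive. -/
def PosDefKernel (k : X × X → A) : Prop :=
  ∀ (n : ℕ) (x : Fin n → X), MatPos (Matrix.of fun i j => k (x i, x j))

/-- The operator `T_k` on `ℓ²(X,H)` of a kernel `k : X × X → A`, via the embedding
`ι : A → B(H)` (it is `0` unless `k` is finitely supported). -/
def TKer (ι : A →⋆ₙₐ[ℂ] (H →L[ℂ] H)) (k : X × X → A) :
    lp (fun _ : X => H) 2 →L[ℂ] lp (fun _ : X => H) 2 :=
  TOp (fun p => ι (k p))

/-- `C` is a complete bound for the Schur multiplication map `S_φ : T_k ↦ T_{φ·k}`,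
tested on (matrices of) finitely supported kernels, which span a dense subspace of
`K(ℓ²(X)) ⊗ A`. -/
def SchurBound (ι : A →⋆ₙₐ[ℂ] (H →L[ℂ] H)) (φ : X → X → (A →ₗ[ℂ] (H →L[ℂ] H)))
    (C : ℝ) : Prop :=
  ∀ (n : ℕ) (k : Fin n → Fin n → (X × X → A)),
    (∀ i j, (Function.support (k i j)).Finite) →
    ‖matOp (Matrix.of fun i j => TOp (fun p => φ p.1 p.2 (k i j p)))‖
      ≤ C * ‖matOp (Matrix.of fun i j => TKer ι (k i j))‖

/-- `φ` is a Schur `A`-multiplier: the map `S_φ : T_k ↦ T_{φ·k}` is completely bounded. -/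
def IsSchurMultiplier (ι : A →⋆ₙₐ[ℂ] (H →L[ℂ] H))
    (φ : X → X → (A →ₗ[ℂ] (H →L[ℂ] H))) : Prop :=
  ∃ C : ℝ, 0 ≤ C ∧ SchurBound ι φ C

/-- The multiplier norm `‖φ‖_m = ‖S_φ‖_cb` of a Schur `A`-multiplier. -/
def schurNorm (ι : A →⋆ₙₐ[ℂ] (H →L[ℂ] H))
    (φ : X → X → (A →ₗ[ℂ] (H →L[ℂ] H))) : ℝ :=
  sInf { C : ℝ | 0 ≤ C ∧ SchurBound ι φ C }

/-- Complete positivity of the map `S_φ : K(ℓ²(X)) ⊗ A → K(ℓ²(X)) ⊗ B(H)`, tested on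
(matrices of) finitely supported kernels. -/
def SchurCP (ι : A →⋆ₙₐ[ℂ] (H →L[ℂ] H)) (φ : X → X → (A →ₗ[ℂ] (H →L[ℂ] H))) : Prop :=
  ∀ (n : ℕ) (k : Fin n → Fin n → (X × X → A)),
    (∀ i j, (Function.support (k i j)).Finite) →
    MatPos (Matrix.of fun i j => TKer ι (k i j)) →
    MatPos (Matrix.of fun i j => TOp (fun p => φ p.1 p.2 (k i j p)))

end Schur

section Dynamics

variable {A : Type*} [NonUnitalCStarAlgebra A]

/-- `α` is an action of the group `G` on `A` by *-automorphisms. -/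
def IsAction (α : G → A ≃⋆ₐ[ℂ] A) : Prop :=
  (∀ a, α 1 a = a) ∧ ∀ s t : G, ∀ a : A, α (s * t) a = α s (α t a)

/-- A *-automorphism of `A`, as a `ℂ`-linear map. -/
def autLin (e : A ≃⋆ₐ[ℂ] A) : A →ₗ[ℂ] A :=
  { toFun := e
    map_add' := fun a b => map_add e a b
    map_smul' := fun c a => map_smul e c a }

/-- The representation `π` of `A` on `ℓ²(G,H)`: `(π(a)ξ)(s) = α_{s⁻¹}(a)(ξ(s))`. -/
def piRep (ι : A →⋆ₙₐ[ℂ] (H →L[ℂ] H)) (α : G → A ≃⋆ₐ[ℂ] A) (a : A) :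
    lp (fun _ : G => H) 2 →L[ℂ] lp (fun _ : G => H) 2 :=
  diagOp (fun s => ι (α s⁻¹ a)) ‖a‖ (fun s =>
    (NonUnitalStarAlgHom.norm_apply_le ι (α s⁻¹ a)).trans_eq
      (StarAlgEquiv.norm_map (α s⁻¹) a))

/-- The reduced crossed product `A ⋊_{α,r} G`, realised concretely on `ℓ²(G,H)` as the
norm closure of the linear span of the operators `π(a)λ_t`. -/
def CrossedSet (ι : A →⋆ₙₐ[ℂ] (H →L[ℂ] H)) (α : G → A ≃⋆ₐ[ℂ] A) :
    Set (lp (fun _ : G => H) 2 →L[ℂ] lp (fun _ : G => H) 2) :=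
  closure (Submodule.span ℂ
    {x | ∃ (a : A) (t : G), x = piRep ι α a * lam t} : Set _)

/-- `E` is the canonical conditional expectation of the reduced crossed product onto `A`:
it is characterised by `ι (E x) = (x)_{e,e}`, the `(e,e)` matrix entry of `x`. -/
def IsCondExp (ι : A →⋆ₙₐ[ℂ] (H →L[ℂ] H)) (α : G → A ≃⋆ₐ[ℂ] A)
    (E : (lp (fun _ : G => H) 2 →L[ℂ] lp (fun _ : G => H) 2) →ₗ[ℂ] A) : Prop :=
  ∀ x ∈ CrossedSet ι α, ι (E x) = (lpEval (1 : G)) ∘L x ∘L (lpSingle (1 : G))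

/-- The defining property of the map `S_F` associated with `F : G → CB(A)`:
`S_F(π(a)λ_s) = π(F(s)(a))λ_s`. -/
def HSGenProp (ι : A →⋆ₙₐ[ℂ] (H →L[ℂ] H)) (α : G → A ≃⋆ₐ[ℂ] A)
    (F : G → (A →ₗ[ℂ] A))
    (Φ : (lp (fun _ : G => H) 2 →L[ℂ] lp (fun _ : G => H) 2) →ₗ[ℂ]
         (lp (fun _ : G => H) 2 →L[ℂ] lp (fun _ : G => H) 2)) : Prop :=
  ∀ (a : A) (s : G), Φ (piRep ι α a * lam s) = piRep ι α (F s a) * lam s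

/-- `Φ` maps the reduced crossed product into itself and, on matrices over the reduced
crossed product, all amplifications of `Φ` are bounded by `C`. -/
def CBBoundOnCrossed (ι : A →⋆ₙₐ[ℂ] (H →L[ℂ] H)) (α : G → A ≃⋆ₐ[ℂ] A)
    (Φ : (lp (fun _ : G => H) 2 →L[ℂ] lp (fun _ : G => H) 2) →ₗ[ℂ]
         (lp (fun _ : G => H) 2 →L[ℂ] lp (fun _ : G => H) 2)) (C : ℝ) : Prop :=
  ∀ (n : ℕ) (M : Matrix (Fin n) (Fin n)
      (lp (fun _ : G => H) 2 →L[ℂ] lp (fun _ : G => H) 2)),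
    (∀ i j, M i j ∈ CrossedSet ι α) →
      ‖matOp (M.map Φ)‖ ≤ C * ‖matOp M‖

/-- `Φ` is completely positive on the reduced crossed product: matrices over the crossed
product which are positive are mapped to positive matrices. -/
def CPOnCrossed (ι : A →⋆ₙₐ[ℂ] (H →L[ℂ] H)) (α : G → A ≃⋆ₐ[ℂ] A)
    (Φ : (lp (fun _ : G => H) 2 →L[ℂ] lp (fun _ : G => H) 2) →ₗ[ℂ]
         (lp (fun _ : G => H) 2 →L[ℂ] lp (fun _ : G => H) 2)) : Prop :=
  (∀ x ∈ CrossedSet ι α, Φ x ∈ CrossedSet ι α) ∧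
  ∀ (n : ℕ) (M : Matrix (Fin n) (Fin n)
      (lp (fun _ : G => H) 2 →L[ℂ] lp (fun _ : G => H) 2)),
    (∀ i j, M i j ∈ CrossedSet ι α) → MatPos M → MatPos (M.map Φ)

/-- `F : G → CB(A)` is a Herz-Schur `(A,G,α)`-multiplier: the map `S_F` determined by
`S_F(π(a)λ_s) = π(F(s)(a))λ_s` extends to a completely bounded map on `A ⋊_{α,r} G`. -/
def IsHerzSchurMultiplier (ι : A →⋆ₙₐ[ℂ] (H →L[ℂ] H)) (α : G → A ≃⋆ₐ[ℂ] A)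
    (F : G → (A →ₗ[ℂ] A)) : Prop :=
  ∃ Φ, HSGenProp ι α F Φ ∧ (∀ x ∈ CrossedSet ι α, Φ x ∈ CrossedSet ι α) ∧
    ∃ C : ℝ, 0 ≤ C ∧ CBBoundOnCrossed ι α Φ C

/-- `F : G → CB(A)` is a completely positive Herz-Schur `(A,G,α)`-multiplier: the map
`S_F` extends to a completely positive (hence completely bounded) map on `A ⋊_{α,r} G`. -/
def IsHerzSchurMultiplierCP (ι : A →⋆ₙₐ[ℂ] (H →L[ℂ] H)) (α : G → A ≃⋆ₐ[ℂ] A)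
    (F : G → (A →ₗ[ℂ] A)) : Prop :=
  ∃ Φ, HSGenProp ι α F Φ ∧ CPOnCrossed ι α Φ ∧
    ∃ C : ℝ, 0 ≤ C ∧ CBBoundOnCrossed ι α Φ C

/-- The function `N(F) : G × G → CB(A)`, `N(F)(s,t)(a) = α_{s⁻¹}(F(st⁻¹)(α_s(a)))`. -/
def NF (α : G → A ≃⋆ₐ[ℂ] A) (F : G → (A →ₗ[ℂ] A)) : G → G → (A →ₗ[ℂ] A) :=
  fun s t => (autLin (α s⁻¹)) ∘ₗ (F (s * t⁻¹)) ∘ₗ (autLin (α s))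

end Dynamics

section Trace

variable {A : Type*} [NonUnitalCStarAlgebra A]

/-- `τ` is a positive linear functional. -/
def IsPositiveFunctional (τ : A →ₗ[ℂ] ℂ) : Prop :=
  ∀ a : A, 0 ≤ τ (star a * a)

/-- `τ` is tracial. -/
def IsTracial (τ : A →ₗ[ℂ] ℂ) : Prop :=
  ∀ a b : A, τ (a * b) = τ (b * a)

/-- `τ` is faithful. -/
def IsFaithfulFunctional (τ : A →ₗ[ℂ] ℂ) : Prop :=
  ∀ a : A, τ (star a * a) = 0 → a = 0

/-- The `L²`-norm `‖a‖_{2,τ} = τ(a*a)^{1/2}` associated with a positive functional `τ`. -/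
def l2norm (τ : A →ₗ[ℂ] ℂ) (a : A) : ℝ :=
  Real.sqrt (τ (star a * a)).re

/-- A map `Φ : A → A` is `L²`-bounded by `C` with respect to `τ`. -/
def L2BoundedBy (τ : A →ₗ[ℂ] ℂ) (Φ : A →ₗ[ℂ] A) (C : ℝ) : Prop :=
  ∀ a : A, l2norm τ (Φ a) ≤ C * l2norm τ a

/-- A map `Φ : A → A` is `L²`-bounded with respect to `τ`, i.e. it extends to a bounded
operator `T_Φ` on `L²(A,τ)`. -/
def L2Bounded (τ : A →ₗ[ℂ] ℂ) (Φ : A →ₗ[ℂ] A) : Prop :=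
  ∃ C : ℝ, 0 ≤ C ∧ L2BoundedBy τ Φ C

/-- The norm of the extension `T_Φ` of `Φ` to `L²(A,τ)`. -/
def l2OpNorm (τ : A →ₗ[ℂ] ℂ) (Φ : A →ₗ[ℂ] A) : ℝ :=
  sInf { C : ℝ | 0 ≤ C ∧ L2BoundedBy τ Φ C }

/-- `Φ` is `L²`-compact with respect to `τ`: the image under `Φ` of the `L²`-unit ball of
`A` is totally bounded in the `L²`-norm; equivalently, the extension `T_Φ` of `Φ` to
`L²(A,τ)` is a compact operator. -/
def L2Compact (τ : A →ₗ[ℂ] ℂ) (Φ : A →ₗ[ℂ] A) : Prop :=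
  ∀ ε : ℝ, 0 < ε → ∃ S : Finset A, ∀ a : A, l2norm τ a ≤ 1 →
    ∃ b ∈ S, l2norm τ (Φ a - b) < ε

end Trace

section Props

variable {A : Type*} [CStarAlgebra A]

/-- The pair `(A,τ)` has the C*-algebra Haagerup property (Definition 3.1, Dong). -/
def CStarHaagerup (τ : A →ₗ[ℂ] ℂ) : Prop :=
  ∃ (I : Type) (_ : Nonempty I) (_ : SemilatticeSup I) (Φ : I → (A →ₗ[ℂ] A)),
    (∀ i, Φ i 1 = 1) ∧
    (∀ i, IsCompletelyPositive (Φ i)) ∧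
    (∀ i (a : A), τ (Φ i (star a * a)) ≤ τ (star a * a)) ∧
    (∀ i, L2Compact τ (Φ i)) ∧
    (∀ a : A, Filter.Tendsto (fun i => l2norm τ (Φ i a - a)) Filter.atTop (nhds 0))

/-- `A` is a nuclear C*-algebra: there is a net of finite-rank completely positive
contractions converging to the identity in the point-norm topology. -/
def NuclearCStarAlgebra (A : Type*) [NonUnitalCStarAlgebra A] : Prop :=
  ∃ (I : Type) (_ : Nonempty I) (_ : SemilatticeSup I) (Φ : I → (A →ₗ[ℂ] A)),
    (∀ i, IsCompletelyPositive (Φ i)) ∧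
    (∀ i (a : A), ‖Φ i a‖ ≤ ‖a‖) ∧
    (∀ i, FiniteDimensional ℂ (LinearMap.range (Φ i))) ∧
    (∀ a : A, Filter.Tendsto (fun i => ‖Φ i a - a‖) Filter.atTop (nhds 0))

/-- A discrete group `G` has the Haagerup property: there is a net of normalised
positive-definite functions on `G`, vanishing at infinity, converging pointwise to `1`. -/
def GroupHaagerup (G : Type*) [Group G] : Prop :=
  ∃ (I : Type) (_ : Nonempty I) (_ : SemilatticeSup I) (φ : I → G → ℂ),
    (∀ i, φ i 1 = 1) ∧
    (∀ i (n : ℕ) (s : Fin n → G) (μ : Fin n → ℂ),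
      0 ≤ ∑ k, ∑ l, (starRingEnd ℂ) (μ k) * φ i ((s k)⁻¹ * s l) * μ l) ∧
    (∀ i, ∀ ε : ℝ, 0 < ε → ∃ S : Finset G, ∀ s ∉ S, ‖φ i s‖ ≤ ε) ∧
    (∀ s : G, Filter.Tendsto (fun i => φ i s) Filter.atTop (nhds 1))

end Props

section More

variable {A : Type*} [NonUnitalCStarAlgebra A]

/-- A star homomorphism, as a `ℂ`-linear map. -/
def iotaLin {B : Type*} [NonUnitalCStarAlgebra B] (ι : A →⋆ₙₐ[ℂ] B) : A →ₗ[ℂ] B :=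
  { toFun := ι
    map_add' := fun a b => map_add ι a b
    map_smul' := fun c a => map_smul ι c a }

/-- A function `φ : X × X → CB(A)` with values in the maps on `A` is of positive type. -/
def PositiveTypeA (φ : X → X → (A →ₗ[ℂ] A)) : Prop :=
  ∀ (m : ℕ) (x : Fin m → X) (a : Matrix (Fin m) (Fin m) A),
    MatPos a → MatPos (Matrix.of fun p q => φ (x p) (x q) (a p q))

/-- The representation `π` of `A` on `ℓ²(G,H)`, as a linear map. -/
def piRepLin (ι : A →⋆ₙₐ[ℂ] (H →L[ℂ] H)) (α : G → A ≃⋆ₐ[ℂ] A) :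
    A →ₗ[ℂ] (lp (fun _ : G => H) 2 →L[ℂ] lp (fun _ : G => H) 2) :=
  { toFun := piRep ι α
    map_add' := fun a b => by
      apply ContinuousLinearMap.ext; intro f
      apply lp.ext; funext s
      have h1 : (((piRep ι α a + piRep ι α b) f :
          lp (fun _ : G => H) 2) : ∀ _ : G, H) s
          = ((piRep ι α a f : ∀ _ : G, H) s) + ((piRep ι α b f : ∀ _ : G, H) s) := by
        rw [ContinuousLinearMap.add_apply]
        exact congrFun (lp.coeFn_add (piRep ι α a f) (piRep ι α b f)) s
      show ι (α s⁻¹ (a + b)) (f s) = _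
      rw [h1]
      show _ = ι (α s⁻¹ a) (f s) + ι (α s⁻¹ b) (f s)
      rw [map_add (α s⁻¹), map_add ι, ContinuousLinearMap.add_apply]
    map_smul' := fun c a => by
      apply ContinuousLinearMap.ext; intro f
      apply lp.ext; funext s
      have h1 : (((c • piRep ι α a) f :
          lp (fun _ : G => H) 2) : ∀ _ : G, H) s
          = c • ((piRep ι α a f : ∀ _ : G, H) s) := by
        rw [ContinuousLinearMap.smul_apply]
        exact congrFun (lp.coeFn_smul c (piRep ι α a f)) s
      show ι (α s⁻¹ (c • a)) (f s) = _
      rw [RingHom.id_apply, h1]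
      show _ = c • ι (α s⁻¹ a) (f s)
      rw [map_smul (α s⁻¹), map_smul ι, ContinuousLinearMap.smul_apply] }

/-- The completely bounded norm of a map defined on the reduced crossed product. -/
def cbNormOnCrossed (ι : A →⋆ₙₐ[ℂ] (H →L[ℂ] H)) (α : G → A ≃⋆ₐ[ℂ] A)
    (Φ : (lp (fun _ : G => H) 2 →L[ℂ] lp (fun _ : G => H) 2) →ₗ[ℂ]
         (lp (fun _ : G => H) 2 →L[ℂ] lp (fun _ : G => H) 2)) : ℝ :=
  sInf { C : ℝ | 0 ≤ C ∧ CBBoundOnCrossed ι α Φ C }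

/-- The `L²`-norm `‖x‖_{2,τ'}` on the reduced crossed product induced by the trace
`τ' = τ ∘ E`. -/
def l2normCr (τ : A →ₗ[ℂ] ℂ)
    (E : (lp (fun _ : G => H) 2 →L[ℂ] lp (fun _ : G => H) 2) →ₗ[ℂ] A)
    (x : lp (fun _ : G => H) 2 →L[ℂ] lp (fun _ : G => H) 2) : ℝ :=
  Real.sqrt (τ (E (star x * x))).re

/-- The map `h_Φ : G → CB(A)` associated with a map `Φ` on the reduced crossed product:
`h_Φ(s)(a) = E(Φ(π(a)λ_s)λ_s*)`. -/
def hMap (ι : A →⋆ₙₐ[ℂ] (H →L[ℂ] H)) (α : G → A ≃⋆ₐ[ℂ] A)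
    (E : (lp (fun _ : G => H) 2 →L[ℂ] lp (fun _ : G => H) 2) →ₗ[ℂ] A)
    (Φ : (lp (fun _ : G => H) 2 →L[ℂ] lp (fun _ : G => H) 2) →ₗ[ℂ]
         (lp (fun _ : G => H) 2 →L[ℂ] lp (fun _ : G => H) 2))
    (s : G) : A →ₗ[ℂ] A :=
  E ∘ₗ (LinearMap.mulRight ℂ (star (lam s))) ∘ₗ Φ ∘ₗ
    (LinearMap.mulRight ℂ (lam (H := H) s)) ∘ₗ piRepLin ι α

end More

section BigProps

open Filter

variable {A : Type*} [CStarAlgebra A]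

/-- The Haagerup property for the `C*`-dynamical system `(A,G,α,τ)` (Definition 3.3). -/
def DynHaagerup (ι : A →⋆ₙₐ[ℂ] (H →L[ℂ] H)) (α : G → A ≃⋆ₐ[ℂ] A)
    (τ : A →ₗ[ℂ] ℂ) : Prop :=
  ∃ (I : Type) (_ : Nonempty I) (_ : SemilatticeSup I) (F : I → G → (A →ₗ[ℂ] A)),
    (∀ i, IsHerzSchurMultiplierCP ι α (F i)) ∧
    (∀ i, F i 1 1 = 1) ∧
    (∀ i (a : A), τ (F i 1 (star a * a)) ≤ τ (star a * a)) ∧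
    (∀ i (t : G), L2Compact τ (F i t)) ∧
    (∀ i, ∀ ε : ℝ, 0 < ε → ∃ S : Finset G, ∀ s ∉ S, l2OpNorm τ (F i s) ≤ ε) ∧
    (∀ (t : G) (a : A),
      Tendsto (fun i => l2norm τ (F i t a - a)) atTop (nhds 0))

/-- The C*-algebra Haagerup property for the reduced crossed product `A ⋊_{α,r} G`
endowed with the induced trace `τ' = τ ∘ E` (Definition 3.1). -/
def CrossedCStarHaagerup (ι : A →⋆ₙₐ[ℂ] (H →L[ℂ] H)) (α : G → A ≃⋆ₐ[ℂ] A)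
    (τ : A →ₗ[ℂ] ℂ)
    (E : (lp (fun _ : G => H) 2 →L[ℂ] lp (fun _ : G => H) 2) →ₗ[ℂ] A) : Prop :=
  ∃ (I : Type) (_ : Nonempty I) (_ : SemilatticeSup I)
    (Φ : I → ((lp (fun _ : G => H) 2 →L[ℂ] lp (fun _ : G => H) 2) →ₗ[ℂ]
              (lp (fun _ : G => H) 2 →L[ℂ] lp (fun _ : G => H) 2))),
    (∀ i, Φ i 1 = 1) ∧
    (∀ i, CPOnCrossed ι α (Φ i)) ∧
    (∀ i, ∀ x ∈ CrossedSet ι α, τ (E (Φ i (star x * x))) ≤ τ (E (star x * x))) ∧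
    (∀ i, ∀ ε : ℝ, 0 < ε →
      ∃ S : Finset (lp (fun _ : G => H) 2 →L[ℂ] lp (fun _ : G => H) 2),
        ∀ x ∈ CrossedSet ι α, l2normCr τ E x ≤ 1 →
          ∃ b ∈ S, l2normCr τ E (Φ i x - b) < ε) ∧
    (∀ x ∈ CrossedSet ι α,
      Tendsto (fun i => l2normCr τ E (Φ i x - x)) atTop (nhds 0))

end BigProps

section Nuc

open Filter

variable {A : Type*} [NonUnitalCStarAlgebra A]

/-- Nuclearity of the reduced crossed product `A ⋊_{α,r} G`: there is a net of
finite-rank completely positive contractions on it converging to the identity in the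
point-norm topology. -/
def CrossedNuclear (ι : A →⋆ₙₐ[ℂ] (H →L[ℂ] H)) (α : G → A ≃⋆ₐ[ℂ] A) : Prop :=
  ∃ (I : Type) (_ : Nonempty I) (_ : SemilatticeSup I)
    (Φ : I → ((lp (fun _ : G => H) 2 →L[ℂ] lp (fun _ : G => H) 2) →ₗ[ℂ]
              (lp (fun _ : G => H) 2 →L[ℂ] lp (fun _ : G => H) 2))),
    (∀ i, CPOnCrossed ι α (Φ i)) ∧
    (∀ i, ∀ x ∈ CrossedSet ι α, ‖Φ i x‖ ≤ ‖x‖) ∧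
    (∀ i, FiniteDimensional ℂ
      (Submodule.span ℂ ((fun x => Φ i x) '' CrossedSet ι α))) ∧
    (∀ x ∈ CrossedSet ι α, Tendsto (fun i => ‖Φ i x - x‖) atTop (nhds 0))

/-- Nuclearity of the `C*`-dynamical system `(A,G,α)` (Definition 4.2): a net of
completely positive, finitely supported Herz-Schur multipliers, with `‖F_i(e)‖_cb ≤ 1`,
with finite-rank values, converging to the identity pointwise in norm. -/
def DynNuclear (ι : A →⋆ₙₐ[ℂ] (H →L[ℂ] H)) (α : G → A ≃⋆ₐ[ℂ] A) : Prop :=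
  ∃ (I : Type) (_ : Nonempty I) (_ : SemilatticeSup I) (F : I → G → (A →ₗ[ℂ] A)),
    (∀ i, IsHerzSchurMultiplierCP ι α (F i)) ∧
    (∀ i, (Function.support (F i)).Finite) ∧
    (∀ i, CBBound (fun a => ι a) (fun a => ι a) (F i 1) 1) ∧
    (∀ i (s : G), FiniteDimensional ℂ (LinearMap.range (F i s))) ∧
    (∀ (s : G) (a : A), Tendsto (fun i => ‖F i s a - a‖) atTop (nhds 0))

end Nuc

section Amen

open Filter

variable {A : Type*} [CStarAlgebra A]

/-- Amenability of the action `α` of a discrete group `G` on a unital C*-algebra `A`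
(Definition 4.5): a net of finitely supported functions `T_i : G → Z(A)⁺` with
`Σ_s T_i(s)² = 1` and `‖Σ_s (T_i(s) - α_t(T_i(t⁻¹s)))*(T_i(s) - α_t(T_i(t⁻¹s)))‖ → 0`. -/
def AmenableAction {G : Type*} [Group G] (α : G → A ≃⋆ₐ[ℂ] A) : Prop :=
  ∃ (I : Type) (_ : Nonempty I) (_ : SemilatticeSup I) (T : I → G → A),
    (∀ i, (Function.support (T i)).Finite) ∧
    (∀ i (s : G) (c : A), Commute (T i s) c) ∧
    (∀ i (s : G), ∃ b : A, T i s = star b * b) ∧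
    (∀ i, ∑ᶠ s : G, T i s * T i s = 1) ∧
    (∀ t : G, Tendsto (fun i =>
        ‖∑ᶠ s : G, star (T i s - α t (T i (t⁻¹ * s))) *
          (T i s - α t (T i (t⁻¹ * s)))‖) atTop (nhds 0))

end Amen

universe u v w

/-- Data for a Stinespring-type representation of an operator-valued function on
`X × X`: a Hilbert space `K`, a *-representation `ρ : A → B(K)` and
families of operators `V, W : X → B(H,K)`. -/
structure OpValuedRep (A : Type u) [NonUnitalCStarAlgebra A]
    (H : Type v) [NormedAddCommGroup H] [InnerProductSpace ℂ H] [CompleteSpace H]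
    (X : Type w) where
  /-- the Hilbert space of the representation -/
  K : Type (max u v w)
  [nacg : NormedAddCommGroup K]
  [ips : InnerProductSpace ℂ K]
  [cpl : CompleteSpace K]
  /-- the representation -/
  ρ : A →⋆ₙₐ[ℂ] (K →L[ℂ] K)
  /-- the left family of operators -/
  V : X → (H →L[ℂ] K)
  /-- the right family of operators -/
  W : X → (H →L[ℂ] K)

attribute [instance] OpValuedRep.nacg OpValuedRep.ips OpValuedRep.cpl

end
noncomputable section
open scoped ComplexOrder ENNReal
open Matrix

/-!
Applying the 2-positive unital map `S_F` to the positive matrix `!![1, x; x*, x* x]` gives the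
Kadison-Schwarz inequality `S_F(x)* S_F(x) ≤ S_F(x* x)` and, from it, contractivity of `S_F`. Both
`E ∘ S_F` and `F(e) ∘ E` kill `π(a)λ_t` for `t ≠ e` and send `π(a)λ_e` to `F(e)(a)`, so they agree
on the crossed product by continuity. Hence
`τ'(S_F(x)* S_F(x)) ≤ τ(E(S_F(x* x))) = τ(F(e)(E(x* x))) ≤ τ(E(x* x)) = τ'(x* x)`.
-/

section TwoPositive

variable {B : Type*} [CStarAlgebra B]
variable {C : Type*} [CStarAlgebra C] [PartialOrder C] [StarOrderedRing C]

lemma MatPos.posSemidef {R ν : Type*} [Ring R] [PartialOrder R] [StarRing R] [StarOrderedRing R]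
    [Fintype ν] {M : Matrix ν ν R} (hM : MatPos M) : M.PosSemidef := by
  obtain ⟨N, rfl⟩ := hM
  exact Matrix.posSemidef_conjTranspose_mul_self N

-- The quadratic form of the matrix at the vector `(-y, 1)` is `z - star y * y`.
lemma MatPos.star_mul_self_le {R : Type*} [Ring R] [PartialOrder R] [StarRing R]
    [StarOrderedRing R] {y y' z : R} (hM : MatPos !![1, y; y', z]) : star y * y ≤ z := by
  have hy' : star y = y' := by simpa using hM.posSemidef.isHermitian.apply 1 0
  have hform := hM.posSemidef.dotProduct_mulVec_nonneg ![-y, 1]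
  simpa [dotProduct, mulVec, Fin.sum_univ_two, hy', neg_add_eq_sub] using hform

/-- `Φ` is 2-positive on `S`: it maps positive `2 × 2` matrices with entries in `S` to positive
matrices. The factor `N` in `M = Nᴴ * N` may have entries outside `S`. -/
def IsTwoPositiveOn {R R' : Type*} [NonUnitalSemiring R] [StarRing R] [Module ℂ R]
    [NonUnitalSemiring R'] [StarRing R'] [Module ℂ R'] (S : Set R) (Φ : R →ₗ[ℂ] R') : Prop :=
  ∀ M : Matrix (Fin 2) (Fin 2) R, (∀ i j, M i j ∈ S) → MatPos M → MatPos (M.map Φ)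

namespace IsTwoPositiveOn

variable {Φ : B →ₗ[ℂ] C} {x : B}

theorem star_map_mul_map_le {S : StarSubalgebra ℂ B} (hΦ : IsTwoPositiveOn (S : Set B) Φ)
    (hΦ1 : Φ 1 = 1) (hx : x ∈ S) : star (Φ x) * Φ x ≤ Φ (star x * x) := by
  have hpos : MatPos !![1, x; star x, star x * x] :=
    ⟨!![1, x; 0, 0], by simp [← Matrix.ext_iff, mul_apply]⟩
  have hmap := hΦ _ (by simp [Fin.forall_fin_two, hx, star_mem hx, mul_mem, one_mem]) hpos
  refine MatPos.star_mul_self_le (y' := Φ (star x)) ?_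
  convert hmap
  simp [← Matrix.ext_iff, hΦ1]

variable [PartialOrder B] [StarOrderedRing B]

lemma map_nonneg {S : Set B} (hΦ : IsTwoPositiveOn S Φ) (hS : 0 ∈ S) (hx : x ∈ S)
    (hx0 : 0 ≤ x) : 0 ≤ Φ x := by
  obtain ⟨b, rfl⟩ := CStarAlgebra.nonneg_iff_eq_star_mul_self.1 hx0
  have hpos : MatPos !![star b * b, 0; 0, 0] :=
    ⟨!![b, 0; 0, 0], by simp [← Matrix.ext_iff, mul_apply]⟩
  have hmap := hΦ _ (by simp [Fin.forall_fin_two, hx, hS]) hpos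
  exact hmap.posSemidef.diag_nonneg (i := 0)

theorem norm_map_le {S : StarSubalgebra ℂ B} (hΦ : IsTwoPositiveOn (S : Set B) Φ)
    (hΦ1 : Φ 1 = 1) (hx : x ∈ S) : ‖Φ x‖ ≤ ‖x‖ := by
  have hxx : star x * x ∈ S := mul_mem (star_mem hx) hx
  have hbound : star x * x ≤ ((‖star x * x‖ : ℝ) : ℂ) • 1 := by
    simpa [Algebra.algebraMap_eq_smul_one] using
      (IsSelfAdjoint.star_mul_self x).le_algebraMap_norm_self
  have hΦbound : Φ (star x * x) ≤ ((‖star x * x‖ : ℝ) : ℂ) • 1 := by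
    have := hΦ.map_nonneg (zero_mem S) (sub_mem (S.smul_mem (one_mem S) _) hxx)
      (sub_nonneg.2 hbound)
    rwa [map_sub, map_smul, hΦ1, sub_nonneg] at this
  have hsq : ‖star (Φ x) * Φ x‖ ≤ ‖star x * x‖ := by
    rw [CStarAlgebra.norm_le_iff_le_algebraMap _ (norm_nonneg _) (star_mul_self_nonneg _),
      Algebra.algebraMap_eq_smul_one, ← Complex.coe_smul]
    exact (hΦ.star_map_mul_map_le hΦ1 hx).trans hΦbound
  rw [CStarRing.norm_star_mul_self, CStarRing.norm_star_mul_self] at hsq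
  exact (mul_self_le_mul_self_iff (norm_nonneg _) (norm_nonneg _)).2 hsq

end IsTwoPositiveOn

end TwoPositive

-- Injective *-homomorphisms commute with `a ↦ a⁻`, and `0 ≤ a` means `a⁻ = 0`.
lemma exists_eq_star_mul_self_of_map_nonneg {A B : Type*} [NonUnitalCStarAlgebra A]
    [NonUnitalCStarAlgebra B] [PartialOrder B] [StarOrderedRing B] {φ : A →⋆ₙₐ[ℂ] B}
    (hφ : Function.Injective φ) {a : A} (ha : 0 ≤ φ a) : ∃ b : A, a = star b * b := by
  let _ := CStarAlgebra.spectralOrder A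
  have := CStarAlgebra.spectralOrderedRing A
  have hsa : IsSelfAdjoint a := hφ <| by rw [map_star]; exact IsSelfAdjoint.of_nonneg ha
  have hneg : φ a⁻ = (φ a)⁻ := by
    simp only [CFC.negPart_def]
    exact NonUnitalStarAlgHomClass.map_cfcₙ φ _ a
  rw [(CFC.negPart_eq_zero_iff (φ a)).2 ha, map_eq_zero_iff φ hφ, CFC.negPart_eq_zero_iff a] at hneg
  exact CStarAlgebra.nonneg_iff_eq_star_mul_self.1 hneg

lemma continuousOn_of_norm_map_le {𝕜 V W : Type*} [NormedField 𝕜] [SeminormedAddCommGroup V]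
    [NormedSpace 𝕜 V] [SeminormedAddCommGroup W] [NormedSpace 𝕜 W] {S : Submodule 𝕜 V}
    {f : V →ₗ[𝕜] W} (hf : ∀ x ∈ S, ‖f x‖ ≤ ‖x‖) : ContinuousOn f S := by
  refine LipschitzOnWith.continuousOn (K := 1) (LipschitzOnWith.of_dist_le_mul fun x hx y hy => ?_)
  simpa [dist_eq_norm] using hf (x - y) (S.sub_mem hx hy)
local notation "ℬ(" G "," H ")" => lp (fun _ : G => H) 2 →L[ℂ] lp (fun _ : G => H) 2

section ReducedCrossedProduct

variable {H : Type*} [NormedAddCommGroup H] [InnerProductSpace ℂ H]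
variable {G : Type*} [Group G]

section Coordinates

variable {X : Type*}

lemma lpSingle_apply_self (x : X) (v : H) : lpSingle x v x = v := by
  classical
  exact lp.single_apply_self (E := fun _ : X => H) 2 x v

lemma lpSingle_apply_of_ne {x y : X} (hyx : y ≠ x) (v : H) : lpSingle x v y = 0 := by
  classical
  exact lp.single_apply_ne (E := fun _ : X => H) 2 x v hyx

lemma norm_lpSingle_le (x : X) :
    ‖(lpSingle x : H →L[ℂ] lp (fun _ : X => H) 2)‖ ≤ 1 :=
  LinearMap.mkContinuous_norm_le _ zero_le_one _

lemma norm_lpEval_le (x : X) : ‖(lpEval x : lp (fun _ : X => H) 2 →L[ℂ] H)‖ ≤ 1 :=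
  LinearMap.mkContinuous_norm_le _ zero_le_one _

end Coordinates

lemma lam_apply (t : G) (f : lp (fun _ : G => H) 2) (s : G) : lam t f s = f (t⁻¹ * s) := rfl

lemma lam_one : lam (1 : G) = (1 : ℬ(G,H)) := by
  ext f s
  simp [lam_apply]

lemma lam_mul_lam (s t : G) : lam s * lam t = (lam (s * t) : ℬ(G,H)) := by
  ext f r
  simp [lam_apply, mul_assoc]

variable [CompleteSpace H]

lemma lpEval_eq_adjoint_lpSingle {X : Type*} (x : X) :
    lpEval x = ContinuousLinearMap.adjoint (lpSingle x : H →L[ℂ] lp (fun _ : X => H) 2) := by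
  classical
  refine (ContinuousLinearMap.eq_adjoint_iff _ _).2 fun f v => ?_
  exact (lp.inner_single_right (𝕜 := ℂ) x v f).symm

section CovariantRepresentation

variable {A : Type*} [NonUnitalCStarAlgebra A]
variable (ι : A →⋆ₙₐ[ℂ] (H →L[ℂ] H)) (α : G → A ≃⋆ₐ[ℂ] A)

lemma piRep_apply (a : A) (f : lp (fun _ : G => H) 2) (s : G) :
    piRep ι α a f s = ι (α s⁻¹ a) (f s) := rfl

lemma star_lam (t : G) : star (lam t : ℬ(G,H)) = lam t⁻¹ := by
  refine ((ContinuousLinearMap.eq_adjoint_iff _ _).2 fun f g => ?_).symm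
  rw [lp.inner_eq_tsum, lp.inner_eq_tsum,
    ← (Equiv.mulLeft t).tsum_eq fun s => inner ℂ (f s) (lam t g s)]
  simp [lam_apply]

lemma piRep_mul (a b : A) : piRep ι α (a * b) = piRep ι α a * piRep ι α b := by
  ext f s
  simp [piRep_apply]

lemma star_piRep (a : A) : star (piRep ι α a) = piRep ι α (star a) := by
  refine ((ContinuousLinearMap.eq_adjoint_iff _ _).2 fun f g => ?_).symm
  simp only [lp.inner_eq_tsum, piRep_apply, map_star, ContinuousLinearMap.star_eq_adjoint,
    ContinuousLinearMap.adjoint_inner_left]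

lemma norm_piRep_le (a : A) : ‖piRep ι α a‖ ≤ ‖a‖ := by
  have hmax : ‖piRep ι α a‖ ≤ max ‖a‖ 0 := by
    unfold piRep diagOp
    exact LinearMap.mkContinuous_norm_le _ (le_max_right ‖a‖ 0) _
  simpa using hmax

variable {α}

lemma lam_mul_piRep (hα : IsAction α) (t : G) (a : A) :
    lam t * piRep ι α a = piRep ι α (α t a) * lam t := by
  ext f s
  simp [lam_apply, piRep_apply, ← hα.2]

lemma piRep_mul_lam_mul_piRep_mul_lam (hα : IsAction α) (a b : A) (s t : G) :
    piRep ι α a * lam s * (piRep ι α b * lam t) = piRep ι α (a * α s b) * lam (s * t) := by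
  rw [mul_assoc, ← mul_assoc (lam s), lam_mul_piRep ι hα, mul_assoc, lam_mul_lam, ← mul_assoc,
    piRep_mul]

lemma star_piRep_mul_lam (hα : IsAction α) (a : A) (t : G) :
    star (piRep ι α a * lam t) = piRep ι α (α t⁻¹ (star a)) * lam t⁻¹ := by
  rw [star_mul, star_lam, star_piRep, lam_mul_piRep ι hα]

lemma piRep_mul_lam_mem_crossedSet (a : A) (t : G) : piRep ι α a * lam t ∈ CrossedSet ι α :=
  subset_closure (Submodule.subset_span ⟨a, t, rfl⟩)

end CovariantRepresentation

section CrossedProduct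

variable {A : Type*} [CStarAlgebra A] {ι : A →⋆ₙₐ[ℂ] (H →L[ℂ] H)} {α : G → A ≃⋆ₐ[ℂ] A}

lemma piRep_one (hι1 : ι 1 = 1) : piRep ι α 1 = 1 := by
  ext f s
  simp [piRep_apply, hι1]

/-- The reduced crossed product `A ⋊_{α,r} G` as a unital C*-subalgebra of `B(ℓ²(G,H))`; its
carrier is `CrossedSet ι α` by definition. -/
def crossedProduct (hι1 : ι 1 = 1) (hα : IsAction α) : StarSubalgebra ℂ ℬ(G,H) :=
  StarSubalgebra.topologicalClosure
    { (Submodule.span ℂ {x | ∃ (a : A) (t : G), x = piRep ι α a * lam t}).toSubalgebra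
        (Submodule.subset_span ⟨1, 1, by rw [piRep_one hι1, lam_one, one_mul]⟩)
        (by
          intro x y hx hy
          have hxy := Submodule.mul_mem_mul hx hy
          rw [Submodule.span_mul_span] at hxy
          refine Submodule.span_mono ?_ hxy
          rintro _ ⟨_, ⟨a, s, rfl⟩, _, ⟨b, t, rfl⟩, rfl⟩
          exact ⟨_, _, piRep_mul_lam_mul_piRep_mul_lam ι hα a b s t⟩) with
      star_mem' := by
        intro x hx
        induction hx using Submodule.span_induction with
        | mem x hx =>
          obtain ⟨a, t, rfl⟩ := hx
          exact Submodule.subset_span ⟨_, _, star_piRep_mul_lam ι hα a t⟩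
        | zero => simp
        | add x y _ _ hx hy => simpa using add_mem hx hy
        | smul c x _ hx => simpa using Submodule.smul_mem _ _ hx }

end CrossedProduct

section ConditionalExpectation

variable {A : Type*} [NonUnitalCStarAlgebra A]
variable {ι : A →⋆ₙₐ[ℂ] (H →L[ℂ] H)} {α : G → A ≃⋆ₐ[ℂ] A}
variable {E : ℬ(G,H) →ₗ[ℂ] A} {x : ℬ(G,H)}

namespace IsCondExp

lemma apply_piRep_mul_lam_one (hE : IsCondExp ι α E) (hι : Function.Injective ι)
    (hα : IsAction α) (a : A) : E (piRep ι α a * lam 1) = a := by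
  apply hι
  rw [hE _ (piRep_mul_lam_mem_crossedSet ι a 1)]
  ext v
  change ι (α 1⁻¹ a) (lpSingle (1 : G) v (1⁻¹ * 1)) = ι a v
  rw [inv_one, one_mul, hα.1, lpSingle_apply_self]

lemma apply_piRep_mul_lam_of_ne_one (hE : IsCondExp ι α E) (hι : Function.Injective ι) (a : A)
    {t : G} (ht : t ≠ 1) : E (piRep ι α a * lam t) = 0 := by
  apply hι
  rw [hE _ (piRep_mul_lam_mem_crossedSet ι a t), map_zero]
  ext v
  change ι (α 1⁻¹ a) (lpSingle (1 : G) v (t⁻¹ * 1)) = 0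
  rw [lpSingle_apply_of_ne (by simpa using ht), map_zero]

lemma norm_apply_le (hE : IsCondExp ι α E) (hι : Function.Injective ι)
    (hx : x ∈ CrossedSet ι α) : ‖E x‖ ≤ ‖x‖ :=
  calc ‖E x‖ = ‖lpEval (1 : G) ∘L x ∘L lpSingle (1 : G)‖ := by
        rw [← NonUnitalStarAlgHom.norm_map ι hι, hE x hx]
    _ ≤ ‖(lpEval (1 : G) : _ →L[ℂ] H)‖ * (‖x‖ * ‖(lpSingle (1 : G) : H →L[ℂ] _)‖) := by
        grw [ContinuousLinearMap.opNorm_comp_le, ContinuousLinearMap.opNorm_comp_le]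
    _ ≤ 1 * (‖x‖ * 1) := by
        grw [norm_lpEval_le, norm_lpSingle_le]
    _ = ‖x‖ := by ring

lemma exists_apply_eq_star_mul_self (hE : IsCondExp ι α E) (hι : Function.Injective ι)
    (hx : x ∈ CrossedSet ι α) (hx0 : 0 ≤ x) : ∃ b : A, E x = star b * b := by
  refine exists_eq_star_mul_self_of_map_nonneg hι ?_
  rw [ContinuousLinearMap.nonneg_iff_isPositive] at hx0
  rw [hE x hx, lpEval_eq_adjoint_lpSingle, ContinuousLinearMap.nonneg_iff_isPositive]
  exact hx0.adjoint_conj _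

lemma positiveFunctional_apply_mono (hE : IsCondExp ι α E) (hι : Function.Injective ι)
    {τ : A →ₗ[ℂ] ℂ} (hτ : IsPositiveFunctional τ) {y : ℬ(G,H)} (hx : x ∈ CrossedSet ι α)
    (hy : y ∈ CrossedSet ι α) (hxy : x ≤ y) : τ (E x) ≤ τ (E y) := by
  have hyx : y - x ∈ CrossedSet ι α := (Submodule.topologicalClosure _).sub_mem hy hx
  obtain ⟨b, hb⟩ := hE.exists_apply_eq_star_mul_self hι hyx (sub_nonneg.2 hxy)
  rw [← sub_nonneg, ← map_sub, ← map_sub, hb]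
  exact hτ b

-- The isometry `V_t : a ↦ π(a)λ_t` of `L²(A,τ)` into `L²(τ')`.
lemma l2normCr_piRep_mul_lam (hE : IsCondExp ι α E) (hι : Function.Injective ι)
    (hα : IsAction α) {τ : A →ₗ[ℂ] ℂ} (hτα : ∀ (t : G) (a : A), τ (α t a) = τ a) (a : A)
    (t : G) : l2normCr τ E (piRep ι α a * lam t) = l2norm τ a := by
  rw [l2normCr, l2norm, star_piRep_mul_lam ι hα, piRep_mul_lam_mul_piRep_mul_lam ι hα,
    inv_mul_cancel, hE.apply_piRep_mul_lam_one hι hα, ← map_mul, hτα]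

end IsCondExp

end ConditionalExpectation

section HerzSchur

variable {A : Type*} [CStarAlgebra A] {ι : A →⋆ₙₐ[ℂ] (H →L[ℂ] H)} {α : G → A ≃⋆ₐ[ℂ] A}
variable {E : ℬ(G,H) →ₗ[ℂ] A} {F : G → (A →ₗ[ℂ] A)} {Φ : ℬ(G,H) →ₗ[ℂ] ℬ(G,H)} {x : ℬ(G,H)}

namespace HSGenProp

lemma map_one (hΦ : HSGenProp ι α F Φ) (hι1 : ι 1 = 1) (hF1 : F 1 1 = 1) : Φ 1 = 1 := by
  simpa only [hF1, piRep_one hι1, lam_one, one_mul] using hΦ 1 1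

lemma map_mem_crossedSet (hΦ : HSGenProp ι α F Φ) (hcont : ContinuousOn Φ (CrossedSet ι α))
    (hx : x ∈ CrossedSet ι α) : Φ x ∈ CrossedSet ι α := by
  refine closure_mono ?_ (hcont.image_closure ⟨x, hx, rfl⟩)
  rw [← Submodule.map_coe, Submodule.map_span, SetLike.coe_subset_coe, Submodule.span_le]
  rintro _ ⟨_, ⟨a, t, rfl⟩, rfl⟩
  exact Submodule.subset_span ⟨F t a, t, hΦ a t⟩

lemma condExp_map_of_mem_span (hΦ : HSGenProp ι α F Φ) (hE : IsCondExp ι α E)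
    (hι : Function.Injective ι) (hα : IsAction α)
    (hx : x ∈ Submodule.span ℂ {x | ∃ (a : A) (t : G), x = piRep ι α a * lam t}) :
    E (Φ x) = F 1 (E x) := by
  refine LinearMap.eqOn_span (f := E ∘ₗ Φ) (g := F 1 ∘ₗ E) ?_ hx
  rintro _ ⟨a, t, rfl⟩
  simp only [LinearMap.comp_apply, hΦ a t]
  obtain rfl | ht := eq_or_ne t 1
  · simp only [hE.apply_piRep_mul_lam_one hι hα]
  · simp only [hE.apply_piRep_mul_lam_of_ne_one hι _ ht, map_zero]

lemma norm_apply_one_le (hΦ : HSGenProp ι α F Φ) (hE : IsCondExp ι α E)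
    (hι : Function.Injective ι) (hα : IsAction α)
    (hnorm : ∀ x ∈ CrossedSet ι α, ‖Φ x‖ ≤ ‖x‖) (a : A) : ‖F 1 a‖ ≤ ‖a‖ :=
  calc ‖F 1 a‖ = ‖E (piRep ι α (F 1 a) * lam 1)‖ := by rw [hE.apply_piRep_mul_lam_one hι hα]
    _ ≤ ‖piRep ι α (F 1 a) * lam 1‖ :=
        hE.norm_apply_le hι (piRep_mul_lam_mem_crossedSet ι (F 1 a) 1)
    _ = ‖Φ (piRep ι α a * lam 1)‖ := by rw [hΦ a 1]
    _ ≤ ‖piRep ι α a * lam 1‖ := hnorm _ (piRep_mul_lam_mem_crossedSet ι a 1)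
    _ ≤ ‖a‖ := by simpa only [lam_one, mul_one] using norm_piRep_le ι α a

theorem condExp_map (hΦ : HSGenProp ι α F Φ) (hE : IsCondExp ι α E)
    (hι : Function.Injective ι) (hα : IsAction α)
    (hnorm : ∀ x ∈ CrossedSet ι α, ‖Φ x‖ ≤ ‖x‖) (hx : x ∈ CrossedSet ι α) :
    E (Φ x) = F 1 (E x) := by
  have hE_cont : ContinuousOn E (CrossedSet ι α) :=
    continuousOn_of_norm_map_le (S := Submodule.topologicalClosure _) fun _ => hE.norm_apply_le hι
  have hΦ_cont : ContinuousOn Φ (CrossedSet ι α) :=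
    continuousOn_of_norm_map_le (S := Submodule.topologicalClosure _) hnorm
  have hF_cont : Continuous (F 1) :=
    AddMonoidHomClass.continuous_of_bound (F 1) 1 fun a => by
      simpa using hΦ.norm_apply_one_le hE hι hα hnorm a
  have hEΦ_cont : ContinuousOn (E ∘ Φ) (CrossedSet ι α) :=
    hE_cont.comp hΦ_cont fun _ => hΦ.map_mem_crossedSet hΦ_cont
  exact Set.EqOn.of_subset_closure (fun _ => hΦ.condExp_map_of_mem_span hE hι hα) hEΦ_cont
    (hF_cont.comp_continuousOn hE_cont) subset_closure subset_rfl hx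

theorem l2normCr_map_le (hΦ : HSGenProp ι α F Φ) (hE : IsCondExp ι α E)
    (hι : Function.Injective ι) (hι1 : ι 1 = 1) (hα : IsAction α) {τ : A →ₗ[ℂ] ℂ}
    (hτ : IsPositiveFunctional τ) (hpos : IsTwoPositiveOn (CrossedSet ι α) Φ)
    (hτF : ∀ a : A, τ (F 1 (star a * a)) ≤ τ (star a * a)) (hF1 : F 1 1 = 1)
    (hx : x ∈ CrossedSet ι α) : l2normCr τ E (Φ x) ≤ l2normCr τ E x := by
  let S := crossedProduct hι1 hα
  have hΦ1 : Φ 1 = 1 := hΦ.map_one hι1 hF1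
  have hnorm : ∀ y ∈ S, ‖Φ y‖ ≤ ‖y‖ := fun _ => hpos.norm_map_le hΦ1
  have hmem : ∀ y ∈ S, Φ y ∈ S := fun _ => hΦ.map_mem_crossedSet
    (continuousOn_of_norm_map_le (S := Submodule.topologicalClosure _) hnorm)
  have hxS : x ∈ S := hx
  have hxx : star x * x ∈ S := mul_mem (star_mem hxS) hxS
  have hΦxx : star (Φ x) * Φ x ∈ S := mul_mem (star_mem (hmem x hxS)) (hmem x hxS)
  obtain ⟨c, hc⟩ := hE.exists_apply_eq_star_mul_self hι hxx (star_mul_self_nonneg x)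
  have hle : τ (E (star (Φ x) * Φ x)) ≤ τ (E (star x * x)) :=
    calc τ (E (star (Φ x) * Φ x)) ≤ τ (E (Φ (star x * x))) :=
          hE.positiveFunctional_apply_mono hι hτ hΦxx (hmem _ hxx)
            (hpos.star_map_mul_map_le hΦ1 hxS)
      _ = τ (F 1 (E (star x * x))) := by rw [hΦ.condExp_map hE hι hα hnorm hxx]
      _ ≤ τ (E (star x * x)) := by rw [hc]; exact hτF c
  exact Real.sqrt_le_sqrt (Complex.le_def.1 hle).1

end HSGenProp

end HerzSchur

end ReducedCrossedProduct

theorem SF_L2_contraction_general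
    {H : Type*} [NormedAddCommGroup H] [InnerProductSpace ℂ H] [CompleteSpace H]
    {A : Type*} [CStarAlgebra A] {G : Type*} [Group G]
    {ι : A →⋆ₙₐ[ℂ] (H →L[ℂ] H)} (hι : Function.Injective ι) (hι1 : ι 1 = 1)
    {α : G → A ≃⋆ₐ[ℂ] A} (hα : IsAction α)
    {τ : A →ₗ[ℂ] ℂ} (hτpos : IsPositiveFunctional τ)
    (hτα : ∀ (t : G) (a : A), τ (α t a) = τ a)
    {E : ℬ(G,H) →ₗ[ℂ] A} (hE : IsCondExp ι α E)
    {F : G → (A →ₗ[ℂ] A)} {Φ : ℬ(G,H) →ₗ[ℂ] ℬ(G,H)}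
    (hgen : HSGenProp ι α F Φ) (hpos : IsTwoPositiveOn (CrossedSet ι α) Φ)
    (hτF : ∀ a : A, τ (F 1 (star a * a)) ≤ τ (star a * a)) (hFe : F 1 1 = 1) :
    (∀ x ∈ CrossedSet ι α, l2normCr τ E (Φ x) ≤ l2normCr τ E x) ∧
    (∀ (t : G) (a : A),
      Φ (piRep ι α a * lam t) = piRep ι α (F t a) * lam t ∧
      l2normCr τ E (Φ (piRep ι α a * lam t)) = l2norm τ (F t a)) := by
  refine ⟨fun x hx => ?_, fun t a => ⟨hgen a t, ?_⟩⟩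
  · exact hgen.l2normCr_map_le hE hι hι1 hα hτpos hpos hτF hFe hx
  · rw [hgen a t, hE.l2normCr_piRep_mul_lam hι hα hτα]

/-- **Lemma 3.6.** If `F : G → CB(A)` is a completely positive Herz-Schur
`(A,G,α)`-multiplier with `τ ∘ F(e) ≤ τ` and `F(e)(1) = 1`, then `S_F` is `L²`-bounded
on `(A ⋊_{α,r} G, τ')` and, under the identification `L²(τ') ≅ ⊕_t L²(A,τ)`,
`T_{S_F} = ⊕_t T_{F(t)}` (expressed here by the diagonal action
`S_F(π(a)λ_t) = π(F(t)(a))λ_t`); in particular `T_{S_F}` is a contraction. -/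
theorem SF_L2_contraction
    {H : Type*} [NormedAddCommGroup H] [InnerProductSpace ℂ H] [CompleteSpace H]
    {A : Type*} [CStarAlgebra A] {G : Type*} [Group G]
    (ι : A →⋆ₙₐ[ℂ] (H →L[ℂ] H)) (hisom : ∀ a : A, ‖ι a‖ = ‖a‖)
    (hnd : NondegenerateRep ι) (hι1 : ι 1 = 1)
    (α : G → A ≃⋆ₐ[ℂ] A) (hα : IsAction α)
    (τ : A →ₗ[ℂ] ℂ) (hτpos : IsPositiveFunctional τ) (hτtr : IsTracial τ)
    (hτf : IsFaithfulFunctional τ) (hτ1 : τ 1 = 1)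
    (hτα : ∀ (t : G) (a : A), τ (α t a) = τ a)
    (E : (lp (fun _ : G => H) 2 →L[ℂ] lp (fun _ : G => H) 2) →ₗ[ℂ] A)
    (hE : IsCondExp ι α E)
    (F : G → (A →ₗ[ℂ] A))
    (Φ : (lp (fun _ : G => H) 2 →L[ℂ] lp (fun _ : G => H) 2) →ₗ[ℂ]
         (lp (fun _ : G => H) 2 →L[ℂ] lp (fun _ : G => H) 2))
    (hgen : HSGenProp ι α F Φ) (hCP : CPOnCrossed ι α Φ)
    (hτF : ∀ a : A, τ (F 1 (star a * a)) ≤ τ (star a * a))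
    (hFe : F 1 1 = 1) :
    -- `S_F` is `L²`-bounded, indeed an `L²`-contraction …
    (∀ x ∈ CrossedSet ι α, l2normCr τ E (Φ x) ≤ l2normCr τ E x) ∧
    -- … and it acts diagonally, as `T_{F(t)}` on each summand `L²_t(τ') ≅ L²(A,τ)`
    (∀ (t : G) (a : A),
      Φ (piRep ι α a * lam t) = piRep ι α (F t a) * lam t ∧
      l2normCr τ E (Φ (piRep ι α a * lam t)) = l2norm τ (F t a)) := by
  have hι : Function.Injective ι := (AddMonoidHomClass.isometry_of_norm ι hisom).injective
  exact SF_L2_contraction_general hι hι1 hα hτpos hτα hE hgen (hCP.2 2) hτF hFe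

end
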